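/- The supremum of the set {(∑_{l=1}^{N−1} x_l)/(N−1) : N ≥ 2, 1 ≤ p ≤ ⌊N/2⌋, x feasible for (N,p)} equals the supremum of the set {α_Ñ/Ñ : Ñ ≥ 5 an integer}. -/

import Mathlib

open Real Finset

/-- `x : ℕ → ℝ` is a feasible vector for `(N, p)`. -/
def feasible (N p : ℕ) (x : ℕ → ℝ) : Prop :=
  (∀ l ∈ Finset.Icc 1 (N - 1), x l = 0 ∨ x l = 1) ∧
  (∀ l ∈ Finset.Icc 1 (N - 1), x l = x (N - l)) ∧
  (∀ k ∈ Finset.Icc 1 (N - 1),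
    ∑ l ∈ Finset.Icc 1 (N - 1),
      x l * Real.cos (2 * π * p * l / N) * (-1 + Real.cos (2 * π * k * l / N)) < 0)

/-- `s_k = ∑_{l=1}^{k} cos(2πl/Ñ)(-1 + cos(2πl/Ñ))`. -/
noncomputable def sseq (Nt k : ℕ) : ℝ :=
  ∑ l ∈ Finset.Icc 1 k, Real.cos (2 * π * l / Nt) * (-1 + Real.cos (2 * π * l / Nt))

/-- `k_c(Ñ)`: the least `k ∈ {1,…,Ñ-1}` with `s_k ≥ 0`. -/
noncomputable def kc (Nt : ℕ) : ℕ :=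
  sInf {k : ℕ | 1 ≤ k ∧ k ≤ Nt - 1 ∧ 0 ≤ sseq Nt k}

/-- `α_Ñ = 2k_c - 1 - 2 s_{k_c-1} / (s_{k_c} - s_{k_c-1})`. -/
noncomputable def alpha (Nt : ℕ) : ℝ :=
  2 * (kc Nt : ℝ) - 1
    - 2 * sseq Nt (kc Nt - 1) / (sseq Nt (kc Nt) - sseq Nt (kc Nt - 1))

/-!
Write `f_j` for the summands of `s_k`. If `p = d q` and `N = d n` with `q` coprime to `n`, the
constraint `k = p` says that the sum of `x_l f_{q l}` is negative. Up to the order of the indices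
this is a knapsack constraint with the weights `f_j`, each residue modulo `n` occurring `d` times.
The fractional optimum takes all indices up to distance `k_c - 1` from `0` and a fraction of those
at distance `k_c`, and has value `d α_n`. Linear programming duality makes this an upper bound, and
since `x_0 = 1` comes for free, every connectivity is at most `(d α_n - 1) / (d n - 1) ≤ α_n / n`.

For the converse, take `N = D n` and `p = D` and realize the fraction by using the critical residues
only in a central block of periods; the rounding error disappears as `D → ∞`. The constraints for
`k ≠ p, N - p` are then automatic. For `x = 1` their sums vanish by orthogonality of characters, and
the witness only drops indices with `cos (2π p l / N) < 0`, whose terms are nonnegative.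
-/

section FiniteSums

variable {M : Type*} [AddCommMonoid M]

lemma sum_range_eq_add_sum_Icc (f : ℕ → M) {N : ℕ} (hN : 0 < N) :
    ∑ l ∈ range N, f l = f 0 + ∑ l ∈ Icc 1 (N - 1), f l := by
  rw [sum_range_eq_add_Ico f hN,
    Icc_sub_one_right_eq_Ico_of_not_isMin (by simpa [isMin_iff_eq_bot] using hN.ne')]

lemma sum_Ico_mul_of_periodic {f : ℕ → M} {n : ℕ} (hf : Function.Periodic f n) (a b : ℕ) :
    ∑ l ∈ Ico (a * n) (b * n), f l = (b - a) • ∑ j ∈ range n, f j := by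
  have shift (m j : ℕ) : f (m * n + j) = f j := by rw [add_comm]; exact hf.nat_mul m j
  rw [sum_Ico_eq_sum_range, ← Nat.sub_mul]
  simp only [shift]
  induction b - a with
  | zero => simp
  | succ d ih => rw [Nat.succ_mul, sum_range_add, ih, succ_nsmul]; simp only [shift]

lemma sum_range_mul_of_periodic {f : ℕ → M} {n : ℕ} (hf : Function.Periodic f n) (d : ℕ) :
    ∑ l ∈ range (d * n), f l = d • ∑ j ∈ range n, f j := by
  simpa using sum_Ico_mul_of_periodic hf 0 d

lemma sum_range_coprime_mul {f : ℕ → M} {n q : ℕ} (hf : Function.Periodic f n)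
    (hq : q.Coprime n) : ∑ j ∈ range n, f (q * j) = ∑ j ∈ range n, f j := by
  have maps : ∀ j ∈ range n, q * j % n ∈ range n := fun j hj ↦
    mem_range.2 (Nat.mod_lt _ (Nat.zero_lt_of_lt (mem_range.1 hj)))
  have inj : Set.InjOn (fun j ↦ q * j % n) (range n) := fun i hi j hj hij ↦
    (Nat.ModEq.cancel_left_of_coprime hq.symm hij).eq_of_lt_of_lt (mem_range.1 hi) (mem_range.1 hj)
  exact sum_nbij _ maps inj (surjOn_of_injOn_of_card_le _ maps inj le_rfl)
    fun j _ ↦ (hf.map_mod_nat _).symm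

lemma sum_range_eq_of_symm {f : ℕ → M} {n k : ℕ} (hk : 2 * k < n)
    (hf : ∀ j ≤ n, f (n - j) = f j) :
    ∑ j ∈ range n, f j = f 0 + 2 • ∑ j ∈ Icc 1 k, f j + ∑ j ∈ Ioo k (n - k), f j := by
  induction k with
  | zero =>
    rw [sum_range_eq_add_sum_Icc f hk]
    have : Icc 1 (n - 1) = Ioo 0 n := by ext; simp only [mem_Icc, mem_Ioo]; omega
    simp [this]
  | succ k ih =>
    have ends : Ioo k (n - k) =
        insert (k + 1) (insert (n - (k + 1)) (Ioo (k + 1) (n - (k + 1)))) := by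
      ext j; simp only [mem_Ioo, mem_insert]; omega
    rw [ih (by omega), sum_Icc_succ_top (by omega), ends,
      sum_insert (by simp only [mem_insert, mem_Ioo]; omega), sum_insert (by simp),
      hf (k + 1) (by omega)]
    abel

lemma sum_range_eq_of_symm_of_eq_zero {f : ℕ → M} {n k : ℕ} (hk : 2 * k < n)
    (hf : ∀ j ≤ n, f (n - j) = f j) (hzero : ∀ j, k < j → j + k < n → f j = 0) :
    ∑ j ∈ range n, f j = f 0 + 2 • ∑ j ∈ Icc 1 k, f j := by
  have middle : ∑ j ∈ Ioo k (n - k), f j = 0 := sum_eq_zero fun j hj ↦ by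
    rw [mem_Ioo] at hj
    exact hzero j hj.1 (by omega)
  rw [sum_range_eq_of_symm hk hf, middle, add_zero]

end FiniteSums

/-- The real part of the `j`-th power of the standard primitive `n`-th root of unity. Every cosine
in the problem has this form, with `j` a product of indices. -/
noncomputable def rootCos (n j : ℕ) : ℝ := cos (2 * π * j / n)

section RootCos

variable {n j k : ℕ}

lemma rootCos_zero (n : ℕ) : rootCos n 0 = 1 := by simp [rootCos]

lemma rootCos_le_one (n j : ℕ) : rootCos n j ≤ 1 := cos_le_one _

lemma rootCos_periodic (n : ℕ) : Function.Periodic (rootCos n) n := fun j ↦ by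
  rcases eq_or_ne n 0 with rfl | hn
  · rfl
  have angle : 2 * π * (j + n : ℕ) / n = 2 * π * j / n + 2 * π := by push_cast; field_simp
  rw [rootCos, angle, cos_add_two_pi, rootCos]

lemma rootCos_mul_sub {m : ℕ} (hj : j ≤ m * n) : rootCos n (m * n - j) = rootCos n j := by
  rcases eq_or_ne n 0 with rfl | hn
  · simp [rootCos]
  have angle : 2 * π * (m * n - j : ℕ) / n = m * (2 * π) - 2 * π * j / n := by
    rw [Nat.cast_sub hj]; push_cast; field_simp
  rw [rootCos, angle, cos_nat_mul_two_pi_sub, rootCos]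

lemma rootCos_sub (hj : j ≤ n) : rootCos n (n - j) = rootCos n j := by
  simpa using rootCos_mul_sub (m := 1) (by simpa using hj)

lemma rootCos_mul_mul {d : ℕ} (hd : d ≠ 0) (n j : ℕ) :
    rootCos (d * n) (d * j) = rootCos n j := by
  have angle : 2 * π * (d * j : ℕ) / (d * n : ℕ) = 2 * π * j / n := by
    push_cast
    rw [mul_left_comm, mul_div_mul_left _ _ (Nat.cast_ne_zero.2 hd)]
  rw [rootCos, angle, rootCos]

lemma rootCos_eq_one_iff (hn : n ≠ 0) : rootCos n j = 1 ↔ n ∣ j := by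
  rw [rootCos, cos_eq_one_iff, ← Int.natCast_dvd_natCast]
  refine exists_congr fun m ↦ ?_
  rw [← @Int.cast_inj ℝ]
  push_cast
  constructor <;> intro h
  · field_simp at h
    linarith
  · rw [h]
    field_simp

lemma rootCos_sub_rootCos (n j k : ℕ) :
    rootCos n k - rootCos n j = 2 * sin (π * ((j + k) / n)) * sin (π * ((j - k) / n)) := by
  have half_add : (2 * π * k / n + 2 * π * j / n) / 2 = π * ((j + k) / n) := by ring
  have half_sub : (2 * π * k / n - 2 * π * j / n) / 2 = -(π * ((j - k) / n)) := by ring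
  rw [rootCos, rootCos, cos_sub_cos, half_add, half_sub, sin_neg]
  ring

lemma rootCos_le_rootCos (hkj : k ≤ j) (hjk : j + k ≤ n) : rootCos n j ≤ rootCos n k := by
  have hkj' : (k : ℝ) ≤ j := mod_cast hkj
  have hjk' : (j + k : ℝ) ≤ n := mod_cast hjk
  have : (0 : ℝ) ≤ k := k.cast_nonneg
  have sin_nonneg_of_le {y : ℝ} (h0 : 0 ≤ y) (hy : y ≤ n) : 0 ≤ sin (π * (y / n)) :=
    sin_nonneg_of_nonneg_of_le_pi (by positivity)
      (mul_le_of_le_one_right pi_nonneg (div_le_one_of_le₀ hy n.cast_nonneg))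
  rw [← sub_nonneg, rootCos_sub_rootCos]
  have := sin_nonneg_of_le (y := j + k) (by positivity) hjk'
  have := sin_nonneg_of_le (y := j - k) (by linarith) (by linarith)
  positivity

lemma rootCos_lt_rootCos (hkj : k < j) (hjk : j + k < n) : rootCos n j < rootCos n k := by
  have hkj' : (k : ℝ) < j := mod_cast hkj
  have hjk' : (j + k : ℝ) < n := mod_cast hjk
  have : (0 : ℝ) ≤ k := k.cast_nonneg
  have sin_pos_of_lt {y : ℝ} (h0 : 0 < y) (hy : y < n) : 0 < sin (π * (y / n)) :=
    sin_pos_of_pos_of_lt_pi (mul_pos pi_pos (div_pos h0 (h0.trans hy)))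
      (mul_lt_of_lt_one_right pi_pos ((div_lt_one (h0.trans hy)).2 hy))
  rw [← sub_pos, rootCos_sub_rootCos]
  have := sin_pos_of_lt (y := j + k) (by linarith) hjk'
  have := sin_pos_of_lt (y := j - k) (by linarith) (by linarith)
  positivity

lemma rootCos_eq_re_pow (n j : ℕ) :
    rootCos n j = (Complex.exp (2 * π * Complex.I / n) ^ j).re := by
  have exponent : j * (2 * π * Complex.I / n) = (2 * π * j / n : ℝ) * Complex.I := by
    push_cast; ring
  rw [← Complex.exp_nat_mul, exponent, Complex.exp_ofReal_mul_I_re, rootCos]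

lemma sum_rootCos_mul_eq_zero (hk : ¬n ∣ k) : ∑ l ∈ range n, rootCos n (k * l) = 0 := by
  rcases eq_or_ne n 0 with rfl | hn
  · simp
  have root := Complex.isPrimitiveRoot_exp n hn
  have pow_ne_one := mt (root.dvd_of_pow_eq_one k) hk
  simp only [rootCos_eq_re_pow, pow_mul, ← Complex.re_sum]
  rw [geom_sum_eq pow_ne_one, pow_right_comm, root.pow_eq_one]
  simp

lemma sum_rootCos_mul_rootCos_eq_zero (hadd : ¬n ∣ j + k) (hsub : ¬j ≡ k [MOD n]) :
    ∑ l ∈ range n, rootCos n (j * l) * rootCos n (k * l) = 0 := by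
  wlog hjk : j ≤ k generalizing j k
  · simpa only [mul_comm] using this (add_comm j k ▸ hadd) (mt Nat.ModEq.symm hsub) (by omega)
  obtain ⟨d, rfl⟩ := Nat.exists_eq_add_of_le hjk
  have hd : ¬n ∣ d := by simpa [Nat.modEq_iff_dvd' hjk] using hsub
  have product (l : ℕ) : rootCos n (j * l) * rootCos n ((j + d) * l) =
      (rootCos n (d * l) + rootCos n ((j + (j + d)) * l)) / 2 := by
    have sub_angle : 2 * π * (d * l : ℕ) / n =
        2 * π * ((j + d) * l : ℕ) / n - 2 * π * (j * l : ℕ) / n := by push_cast; ring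
    have add_angle : 2 * π * ((j + (j + d)) * l : ℕ) / n =
        2 * π * ((j + d) * l : ℕ) / n + 2 * π * (j * l : ℕ) / n := by push_cast; ring
    rw [rootCos, rootCos, rootCos, rootCos, sub_angle, add_angle, ← two_mul_cos_mul_cos]
    ring
  simp only [product, ← sum_div, sum_add_distrib, sum_rootCos_mul_eq_zero hd,
    sum_rootCos_mul_eq_zero hadd, add_zero, zero_div]

lemma sum_mul_rootCos_mul_neg {p l₀ : ℕ} {x : ℕ → ℝ}
    (hx : ∀ l, x l = 1 ∨ x l = 0 ∧ rootCos n (p * l) < 0) (hl₀ : l₀ < n) (hxl₀ : x l₀ = 0)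
    (hk : ¬n ∣ k * l₀) (hp : ¬n ∣ p) (hadd : ¬n ∣ p + k) (hsub : ¬p ≡ k [MOD n]) :
    ∑ l ∈ range n, x l * rootCos n (p * l) * (-1 + rootCos n (k * l)) < 0 := by
  have full_sum : ∑ l ∈ range n, rootCos n (p * l) * (-1 + rootCos n (k * l)) = 0 := by
    simp only [mul_add, mul_neg_one, sum_add_distrib, sum_neg_distrib,
      sum_rootCos_mul_eq_zero hp, sum_rootCos_mul_rootCos_eq_zero hadd hsub, neg_zero, add_zero]
  rw [← full_sum]
  refine sum_lt_sum (fun l _ ↦ ?_) ⟨l₀, mem_range.2 hl₀, ?_⟩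
  · rcases hx l with h | ⟨h, hcos⟩
    · rw [h, one_mul]
    · rw [h, zero_mul, zero_mul]
      exact mul_nonneg_of_nonpos_of_nonpos hcos.le (by linarith [rootCos_le_one n (k * l)])
  · have hcos : rootCos n (p * l₀) < 0 := ((hx l₀).resolve_left (by simp [hxl₀])).2
    have hlt : rootCos n (k * l₀) < 1 :=
      (rootCos_le_one _ _).lt_of_ne (mt (rootCos_eq_one_iff (by omega)).1 hk)
    rw [hxl₀, zero_mul, zero_mul]
    exact mul_pos_of_neg_of_neg hcos (by linarith)

end RootCos

/-- The `j`-th summand of `sseq n`, so that `sseq n k = ∑ j ∈ Icc 1 k, sseqTerm n j` holds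
definitionally. -/
noncomputable def sseqTerm (n j : ℕ) : ℝ := rootCos n j * (-1 + rootCos n j)

section SseqTerm

variable {n j k : ℕ}

lemma sseq_eq_sum (n k : ℕ) : sseq n k = ∑ j ∈ Icc 1 k, sseqTerm n j := rfl

lemma sseq_succ (n k : ℕ) : sseq n (k + 1) = sseq n k + sseqTerm n (k + 1) :=
  sum_Icc_succ_top (by omega) _

lemma sseqTerm_zero (n : ℕ) : sseqTerm n 0 = 0 := by simp [sseqTerm, rootCos_zero]

lemma sseqTerm_periodic (n : ℕ) : Function.Periodic (sseqTerm n) n := fun j ↦ by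
  rw [sseqTerm, rootCos_periodic, sseqTerm]

lemma sseqTerm_sub (hj : j ≤ n) : sseqTerm n (n - j) = sseqTerm n j := by
  rw [sseqTerm, rootCos_sub hj, sseqTerm]

lemma sseqTerm_le_two (n j : ℕ) : sseqTerm n j ≤ 2 := by
  have := rootCos_le_one n j
  have : -1 ≤ rootCos n j := neg_one_le_cos _
  unfold sseqTerm
  nlinarith

lemma sseqTerm_le_sseqTerm (hk : rootCos n k ≤ 0) (hkj : rootCos n k ≤ rootCos n j) :
    sseqTerm n j ≤ sseqTerm n k := by
  have factored : sseqTerm n k - sseqTerm n j =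
      (rootCos n j - rootCos n k) * (1 - rootCos n j - rootCos n k) := by
    unfold sseqTerm; ring
  rw [← sub_nonneg, factored]
  exact mul_nonneg (by linarith) (by linarith [rootCos_le_one n j])

lemma rootCos_neg_of_sseqTerm_pos (h : 0 < sseqTerm n j) : rootCos n j < 0 := by
  by_contra! hc
  exact h.not_ge (mul_nonpos_of_nonneg_of_nonpos hc (by linarith [rootCos_le_one n j]))

lemma sseqTerm_nonneg_of_le_four (hn : n ≤ 4) (j : ℕ) : 0 ≤ sseqTerm n j := by
  rcases Nat.eq_zero_or_pos n with rfl | hn0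
  · simp [sseqTerm, rootCos]
  rw [← (sseqTerm_periodic n).map_mod_nat]
  have hlt := Nat.mod_lt j hn0
  rcases Nat.eq_zero_or_pos (j % n) with h0 | hpos
  · rw [h0, sseqTerm_zero]
  have one_nonpos : rootCos n 1 ≤ 0 := by
    have hn2 : (2 : ℝ) ≤ n := mod_cast (by omega : 2 ≤ n)
    have hn4 : (n : ℝ) ≤ 4 := mod_cast hn
    have := pi_pos
    refine cos_nonpos_of_pi_div_two_le_of_le ?_ ?_
    · rw [div_le_div_iff₀ two_pos (by linarith)]
      push_cast
      nlinarith
    · rw [div_le_iff₀ (by linarith)]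
      push_cast
      nlinarith
  have le_one : rootCos n (j % n) ≤ rootCos n 1 := rootCos_le_rootCos hpos (by omega)
  exact mul_nonneg_of_nonpos_of_nonpos (by linarith) (by linarith)

lemma sum_sseqTerm (hn : 3 ≤ n) : ∑ j ∈ range n, sseqTerm n j = n / 2 := by
  have not_dvd_one : ¬n ∣ 1 := fun h ↦ by have := Nat.le_of_dvd one_pos h; omega
  have not_dvd_two : ¬n ∣ 2 := fun h ↦ by have := Nat.le_of_dvd two_pos h; omega
  have expand (j : ℕ) :
      sseqTerm n j = 1 / 2 + rootCos n (2 * j) / 2 - rootCos n (1 * j) := by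
    have double : rootCos n (2 * j) = 2 * rootCos n j ^ 2 - 1 := by
      rw [rootCos, rootCos, ← cos_two_mul]
      push_cast
      ring_nf
    rw [double, one_mul, sseqTerm]
    ring
  simp only [expand, sum_sub_distrib, sum_add_distrib, ← sum_div,
    sum_rootCos_mul_eq_zero not_dvd_one, sum_rootCos_mul_eq_zero not_dvd_two]
  simp [div_eq_mul_inv]

end SseqTerm

section CriticalIndex

variable {n : ℕ}

lemma sseq_half_nonneg (hn : 4 ≤ n) : 0 ≤ sseq n ((n - 1) / 2) := by
  have split := sum_range_eq_of_symm (by omega : 2 * ((n - 1) / 2) < n)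
    fun j hj ↦ sseqTerm_sub (n := n) hj
  rw [sum_sseqTerm (by omega), sseqTerm_zero, ← sseq_eq_sum] at split
  -- The middle range is empty or the single index `n / 2`.
  have middle : ∑ j ∈ Ioo ((n - 1) / 2) (n - (n - 1) / 2), sseqTerm n j ≤ 2 := by
    refine (sum_le_card_nsmul _ _ 2 fun j _ ↦ sseqTerm_le_two n j).trans ?_
    have card_le : #(Ioo ((n - 1) / 2) (n - (n - 1) / 2)) ≤ 1 := by rw [Nat.card_Ioo]; omega
    simpa using mul_le_mul_of_nonneg_right (Nat.cast_le (α := ℝ).2 card_le) zero_le_two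
  have : (4 : ℝ) ≤ n := mod_cast hn
  rw [two_nsmul] at split
  linarith

lemma sseq_one_neg (hn : 5 ≤ n) : sseq n 1 < 0 := by
  have lt_one : rootCos n 1 < 1 := rootCos_zero n ▸ rootCos_lt_rootCos one_pos (by omega)
  have pos : 0 < rootCos n 1 := by
    have hn' : (5 : ℝ) ≤ n := mod_cast hn
    have := pi_pos
    refine cos_pos_of_mem_Ioo ⟨?_, ?_⟩
    · have : 0 ≤ 2 * π * (1 : ℕ) / n := by positivity
      linarith
    · rw [div_lt_div_iff₀ (by linarith) two_pos]
      push_cast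
      nlinarith
  rw [sseq_eq_sum, Icc_self, sum_singleton]
  exact mul_neg_of_pos_of_neg pos (by linarith)

lemma kc_mem (hn : 4 ≤ n) : 1 ≤ kc n ∧ kc n ≤ n - 1 ∧ 0 ≤ sseq n (kc n) :=
  Nat.sInf_mem (s := {k | 1 ≤ k ∧ k ≤ n - 1 ∧ 0 ≤ sseq n k})
    ⟨(n - 1) / 2, by omega, by omega, sseq_half_nonneg hn⟩

lemma two_mul_kc_lt (hn : 4 ≤ n) : 2 * kc n < n := by
  have : kc n ≤ (n - 1) / 2 := Nat.sInf_le ⟨by omega, by omega, sseq_half_nonneg hn⟩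
  omega

lemma kc_ne_one (hn : 5 ≤ n) : kc n ≠ 1 := fun h ↦
  (sseq_one_neg hn).not_ge (h ▸ (kc_mem (by omega)).2.2)

lemma sseq_kc_sub_one_neg (hn : 5 ≤ n) : sseq n (kc n - 1) < 0 := by
  obtain ⟨one_le, le, -⟩ := kc_mem (n := n) (by omega)
  have := kc_ne_one hn
  by_contra! h
  have : kc n ≤ kc n - 1 := Nat.sInf_le ⟨by omega, by omega, h⟩
  omega

lemma sseq_kc (hn : 4 ≤ n) : sseq n (kc n) = sseq n (kc n - 1) + sseqTerm n (kc n) := by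
  rw [← Nat.sub_add_cancel (kc_mem hn).1, sseq_succ, Nat.add_sub_cancel]

lemma sseqTerm_kc_pos (hn : 5 ≤ n) : 0 < sseqTerm n (kc n) := by
  have := sseq_kc (n := n) (by omega)
  linarith [sseq_kc_sub_one_neg hn, (kc_mem (n := n) (by omega)).2.2]

lemma rootCos_kc_neg (hn : 5 ≤ n) : rootCos n (kc n) < 0 :=
  rootCos_neg_of_sseqTerm_pos (sseqTerm_kc_pos hn)

/-- The fraction of the step from `sseq n (kc n - 1)` to `sseq n (kc n)` that lies above zero. In
terms of it, `alpha n = 2 * kc n + 1 - 2 * overshoot n`. -/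
noncomputable def overshoot (n : ℕ) : ℝ := sseq n (kc n) / sseqTerm n (kc n)

lemma overshoot_nonneg (hn : 5 ≤ n) : 0 ≤ overshoot n :=
  div_nonneg (kc_mem (by omega)).2.2 (sseqTerm_kc_pos hn).le

lemma overshoot_lt_one (hn : 5 ≤ n) : overshoot n < 1 := by
  rw [overshoot, div_lt_one (sseqTerm_kc_pos hn), sseq_kc (by omega)]
  linarith [sseq_kc_sub_one_neg hn]

lemma alpha_eq (hn : 5 ≤ n) : alpha n = 2 * kc n + 1 - 2 * overshoot n := by
  have := (sseqTerm_kc_pos hn).ne'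
  rw [alpha, overshoot, sseq_kc (by omega), add_sub_cancel_left]
  field_simp
  ring

lemma alpha_le (hn : 5 ≤ n) : alpha n ≤ n := by
  have : (2 * kc n + 1 : ℝ) ≤ n := mod_cast two_mul_kc_lt (by omega)
  rw [alpha_eq hn]
  linarith [overshoot_nonneg hn]

lemma bddAbove_alpha_div : BddAbove {v : ℝ | ∃ n : ℕ, 5 ≤ n ∧ v = alpha n / (n : ℝ)} := by
  refine ⟨1, ?_⟩
  rintro _ ⟨n, hn, rfl⟩
  exact div_le_one_of_le₀ (alpha_le hn) n.cast_nonneg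

end CriticalIndex

/-- The fraction `(∑ x_l) / (N - 1)` of entries used by `x`, the objective of the problem. -/
noncomputable def connectivity (N : ℕ) (x : ℕ → ℝ) : ℝ :=
  (∑ l ∈ Icc 1 (N - 1), x l) / ((N : ℝ) - 1)

lemma feasible_sum_eq (N p k : ℕ) (x : ℕ → ℝ) :
    ∑ l ∈ Icc 1 (N - 1), x l * cos (2 * π * p * l / N) * (-1 + cos (2 * π * k * l / N)) =
      ∑ l ∈ range N, x l * rootCos N (p * l) * (-1 + rootCos N (k * l)) := by
  rcases Nat.eq_zero_or_pos N with rfl | hN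
  · simp
  rw [sum_range_eq_add_sum_Icc _ hN]
  simp [rootCos, mul_assoc]

section UpperBound

/-- The complementary slack `1 - f_j / f_{k_c}` of the terms `f_j = sseqTerm n j`, cut off at zero.
It is the optimal dual solution of the linear program over `0 ≤ x ≤ 1` whose only constraint is
that the sum of the `x_l f_l` be nonpositive. -/
noncomputable def dualSlack (n j : ℕ) : ℝ := max (1 - sseqTerm n j / sseqTerm n (kc n)) 0

variable {n j : ℕ}

lemma dualSlack_periodic (n : ℕ) : Function.Periodic (dualSlack n) n := fun j ↦ by
  rw [dualSlack, sseqTerm_periodic, dualSlack]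

lemma dualSlack_sub (hj : j ≤ n) : dualSlack n (n - j) = dualSlack n j := by
  rw [dualSlack, sseqTerm_sub hj, dualSlack]

lemma dualSlack_zero (n : ℕ) : dualSlack n 0 = 1 := by simp [dualSlack, sseqTerm_zero]

lemma sub_mul_div_le_dualSlack {t : ℝ} (ht : t = 0 ∨ t = 1) (n j : ℕ) :
    t - t * sseqTerm n j / sseqTerm n (kc n) ≤ dualSlack n j := by
  rcases ht with rfl | rfl <;> simp [dualSlack]

lemma dualSlack_of_le_kc (hn : 5 ≤ n) (hj : j ≤ kc n) :
    dualSlack n j = 1 - sseqTerm n j / sseqTerm n (kc n) := by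
  have := two_mul_kc_lt (n := n) (by omega)
  refine max_eq_left (sub_nonneg.2 ((div_le_one (sseqTerm_kc_pos hn)).2 ?_))
  exact sseqTerm_le_sseqTerm (rootCos_kc_neg hn).le (rootCos_le_rootCos hj (by omega))

lemma dualSlack_eq_zero (hn : 5 ≤ n) (hj : kc n ≤ j) (hj' : j + kc n ≤ n) :
    dualSlack n j = 0 := by
  have cos_le := rootCos_le_rootCos hj hj'
  refine max_eq_right (sub_nonpos.2 ((one_le_div (sseqTerm_kc_pos hn)).2 ?_))
  exact sseqTerm_le_sseqTerm (cos_le.trans (rootCos_kc_neg hn).le) cos_le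

lemma sum_dualSlack (hn : 5 ≤ n) : ∑ j ∈ range n, dualSlack n j = alpha n := by
  have slack_sum : ∑ j ∈ Icc 1 (kc n), dualSlack n j = kc n - overshoot n := by
    rw [sum_congr rfl fun j hj ↦ dualSlack_of_le_kc hn (mem_Icc.1 hj).2, sum_sub_distrib,
      ← sum_div, ← sseq_eq_sum, ← overshoot]
    simp
  rw [sum_range_eq_of_symm_of_eq_zero (two_mul_kc_lt (by omega)) (fun j ↦ dualSlack_sub)
    fun j hj hj' ↦ dualSlack_eq_zero hn hj.le hj'.le, slack_sum, dualSlack_zero, alpha_eq hn,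
    nsmul_eq_mul]
  push_cast
  ring

lemma sum_range_dualSlack_coprime_mul {q : ℕ} (hn : 5 ≤ n) (hq : q.Coprime n) (d : ℕ) :
    ∑ l ∈ range (d * n), dualSlack n (q * l) = d * alpha n := by
  have periodic : Function.Periodic (fun l ↦ dualSlack n (q * l)) n := fun l ↦ by
    simpa [mul_add] using (dualSlack_periodic n).nat_mul q (q * l)
  rw [sum_range_mul_of_periodic periodic, sum_range_coprime_mul (dualSlack_periodic n) hq,
    sum_dualSlack hn, nsmul_eq_mul]

variable {d q : ℕ} {x : ℕ → ℝ}

lemma sum_mul_sseqTerm_neg_of_feasible (hd : 0 < d) (hq : 0 < q) (hqn : q < n)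
    (hx : feasible (d * n) (d * q) x) :
    ∑ l ∈ Icc 1 (d * n - 1), x l * sseqTerm n (q * l) < 0 := by
  have hlt : d * q < d * n := Nat.mul_lt_mul_of_pos_left hqn hd
  have constraint := hx.2.2 (d * q) (mem_Icc.2 ⟨Nat.mul_pos hd hq, by omega⟩)
  rw [feasible_sum_eq, sum_range_eq_add_sum_Icc _ (by omega)] at constraint
  simpa [mul_assoc, rootCos_mul_mul hd.ne', rootCos_zero, sseqTerm] using constraint

lemma five_le_of_feasible (hd : 0 < d) (hq : 0 < q) (hqn : q < n)
    (hx : feasible (d * n) (d * q) x) : 5 ≤ n := by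
  by_contra! hn
  refine (sum_mul_sseqTerm_neg_of_feasible hd hq hqn hx).not_ge (sum_nonneg fun l hl ↦ ?_)
  have := sseqTerm_nonneg_of_le_four (by omega : n ≤ 4) (q * l)
  rcases hx.1 l hl with h | h <;> simp [h, this]

lemma sum_le_of_feasible (hd : 0 < d) (hq : 0 < q) (hqn : q < n) (hcop : q.Coprime n)
    (hx : feasible (d * n) (d * q) x) :
    ∑ l ∈ Icc 1 (d * n - 1), x l ≤ d * alpha n - 1 := by
  have hn := five_le_of_feasible hd hq hqn hx
  have slack_sum : 1 + ∑ l ∈ Icc 1 (d * n - 1), dualSlack n (q * l) = d * alpha n := by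
    rw [← sum_range_dualSlack_coprime_mul hn hcop d,
      sum_range_eq_add_sum_Icc _ (Nat.mul_pos hd (by omega)), mul_zero, dualSlack_zero]
  have weak_duality := sum_le_sum fun l hl ↦ sub_mul_div_le_dualSlack (hx.1 l hl) n (q * l)
  rw [sum_sub_distrib, ← sum_div] at weak_duality
  have := div_neg_of_neg_of_pos (sum_mul_sseqTerm_neg_of_feasible hd hq hqn hx)
    (sseqTerm_kc_pos hn)
  linarith

lemma exists_connectivity_le_alpha_div {N p : ℕ} (hp : 0 < p) (hpN : p < N)
    (hx : feasible N p x) : ∃ n : ℕ, 5 ≤ n ∧ connectivity N x ≤ alpha n / n := by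
  obtain ⟨d, q, n, hd, hcop, rfl, rfl⟩ : ∃ d q n, 0 < d ∧ q.Coprime n ∧ p = d * q ∧ N = d * n := by
    obtain ⟨q, n, hcop, hpq, hNn⟩ := Nat.exists_coprime p N
    exact ⟨p.gcd N, q, n, Nat.gcd_pos_of_pos_left N hp, hcop, by rwa [mul_comm], by rwa [mul_comm]⟩
  have hq : 0 < q := Nat.pos_of_mul_pos_left hp
  have hqn : q < n := Nat.lt_of_mul_lt_mul_left hpN
  have hn := five_le_of_feasible hd hq hqn hx
  have hn' : (0 : ℝ) < n := mod_cast (by omega : 0 < n)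
  have hdn : (1 : ℝ) < (d * n : ℕ) := mod_cast (by omega : 1 < d * n)
  refine ⟨n, hn, ?_⟩
  rw [connectivity, div_le_div_iff₀ (by linarith) hn']
  calc (∑ l ∈ Icc 1 (d * n - 1), x l) * n
      ≤ (d * alpha n - 1) * n := by gcongr; exact sum_le_of_feasible hd hq hqn hcop hx
    _ = alpha n * ((d * n : ℕ) : ℝ) - n := by push_cast; ring
    _ ≤ alpha n * ((d * n : ℕ) - 1) := by linarith [alpha_le hn]

end UpperBound

section LowerBound

open Filter

/-- The witness with `N = D * n` and `p = D`: the entries within cyclic distance less than `k` of a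
multiple of `n`, plus, in the central window `[a * n, (D - a) * n]`, those at distance exactly `k`.
Comparing cosines encodes the distance, which makes reflection symmetry and periodicity evident. -/
noncomputable def witness (n k D a l : ℕ) : ℝ :=
  if rootCos n k < rootCos n l ∨
      (rootCos n k = rootCos n l ∧ a * n ≤ l ∧ l ≤ (D - a) * n) then 1 else 0

variable {n k D a : ℕ}

lemma witness_eq_zero_or_one (n k D a l : ℕ) : witness n k D a l = 0 ∨ witness n k D a l = 1 := by
  unfold witness
  split_ifs <;> simp

lemma witness_eq_one_or_rootCos_le (n k D a l : ℕ) :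
    witness n k D a l = 1 ∨ witness n k D a l = 0 ∧ rootCos n l ≤ rootCos n k := by
  unfold witness
  split_ifs with h
  · exact .inl rfl
  · exact .inr ⟨rfl, not_lt.1 (not_or.1 h).1⟩

lemma witness_zero (hk : rootCos n k < 1) : witness n k D a 0 = 1 := by
  simp [witness, rootCos_zero, hk]

lemma witness_eq_zero_of_lt {l : ℕ} (hcos : rootCos n l ≤ rootCos n k) (hl : l < a * n) :
    witness n k D a l = 0 :=
  if_neg (by rintro (h | h) <;> [exact hcos.not_gt h; omega])

lemma witness_sub {l : ℕ} (haD : a ≤ D) (hl : l ≤ D * n) :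
    witness n k D a (D * n - l) = witness n k D a l := by
  have window : a * n ≤ D * n - l ∧ D * n - l ≤ (D - a) * n ↔ a * n ≤ l ∧ l ≤ (D - a) * n := by
    have := Nat.mul_le_mul_right n haD
    rw [Nat.sub_mul]
    omega
  simp only [witness, rootCos_mul_sub hl, window]

lemma sum_Ico_ite_rootCos_lt {G : ℕ → ℝ} (hk : 0 < k) (hkn : 2 * k < n)
    (hper : Function.Periodic G n) (hG : ∀ j ≤ n, G (n - j) = G j) (b c : ℕ) :
    ∑ l ∈ Ico (b * n) (c * n), (if rootCos n k < rootCos n l then G l else 0) =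
      (c - b : ℕ) * (G 0 + 2 * ∑ j ∈ Icc 1 (k - 1), G j) := by
  have lt_of_lt {j : ℕ} (hj : j < k) : rootCos n k < rootCos n j :=
    rootCos_lt_rootCos hj (by omega)
  rw [sum_Ico_mul_of_periodic (fun l ↦ by simp only [rootCos_periodic n l, hper l]),
    sum_range_eq_of_symm_of_eq_zero (k := k - 1) (by omega)
      (fun j hj ↦ by rw [rootCos_sub hj, hG j hj])
      (fun j hj hj' ↦ if_neg (rootCos_le_rootCos (by omega) (by omega)).not_gt),
    if_pos (lt_of_lt hk), sum_congr rfl fun j hj ↦ if_pos (lt_of_lt (j := j) ?_), two_nsmul,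
    two_mul, nsmul_eq_mul]
  have := mem_Icc.1 hj
  omega

lemma sum_Ico_ite_rootCos_le {G : ℕ → ℝ} (hkn : 2 * k < n)
    (hper : Function.Periodic G n) (hG : ∀ j ≤ n, G (n - j) = G j) (b c : ℕ) :
    ∑ l ∈ Ico (b * n) (c * n), (if rootCos n k ≤ rootCos n l then G l else 0) =
      (c - b : ℕ) * (G 0 + 2 * ∑ j ∈ Icc 1 k, G j) := by
  have le_of_le {j : ℕ} (hj : j ≤ k) : rootCos n k ≤ rootCos n j :=
    rootCos_le_rootCos hj (by omega)
  rw [sum_Ico_mul_of_periodic (fun l ↦ by simp only [rootCos_periodic n l, hper l]),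
    sum_range_eq_of_symm_of_eq_zero hkn (fun j hj ↦ by rw [rootCos_sub hj, hG j hj])
      (fun j hj hj' ↦ if_neg (rootCos_lt_rootCos hj hj').not_ge),
    if_pos (le_of_le k.zero_le), sum_congr rfl fun j hj ↦ if_pos (le_of_le (mem_Icc.1 hj).2),
    two_nsmul, two_mul, nsmul_eq_mul]

lemma witness_of_not_window {l : ℕ} (hk : rootCos n k < 1) (hl : l < a * n ∨ (D - a) * n ≤ l) :
    witness n k D a l = if rootCos n k < rootCos n l then 1 else 0 := by
  refine if_congr (or_iff_left_of_imp fun ⟨heq, hal, hlD⟩ ↦ ?_) rfl rfl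
  obtain rfl : l = (D - a) * n := by omega
  have : rootCos n ((D - a) * n) = 1 := by
    simpa [rootCos_zero] using rootCos_mul_sub (n := n) (m := D - a) (Nat.zero_le _)
  exact (hk.ne (heq.trans this)).elim

lemma witness_of_window {l : ℕ} (hal : a * n ≤ l) (hlD : l ≤ (D - a) * n) :
    witness n k D a l = if rootCos n k ≤ rootCos n l then 1 else 0 := by
  simp only [witness, hal, hlD, and_true, ← le_iff_lt_or_eq]

lemma sum_witness_mul {G : ℕ → ℝ} (hk : 0 < k) (hkn : 2 * k < n) (haD : 2 * a ≤ D)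
    (hper : Function.Periodic G n) (hG : ∀ j ≤ n, G (n - j) = G j) :
    ∑ l ∈ range (D * n), witness n k D a l * G l =
      2 * a * (G 0 + 2 * ∑ j ∈ Icc 1 (k - 1), G j) +
        (D - 2 * a) * (G 0 + 2 * ∑ j ∈ Icc 1 k, G j) := by
  have hk1 : rootCos n k < 1 := rootCos_zero n ▸ rootCos_lt_rootCos hk (by omega)
  have left : ∑ l ∈ Ico 0 (a * n), witness n k D a l * G l =
      (a - 0 : ℕ) * (G 0 + 2 * ∑ j ∈ Icc 1 (k - 1), G j) := by
    rw [← sum_Ico_ite_rootCos_lt hk hkn hper hG, zero_mul]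
    refine sum_congr rfl fun l hl ↦ ?_
    rw [witness_of_not_window hk1 (.inl (mem_Ico.1 hl).2), ite_mul, one_mul, zero_mul]
  have window : ∑ l ∈ Ico (a * n) ((D - a) * n), witness n k D a l * G l =
      (D - a - a : ℕ) * (G 0 + 2 * ∑ j ∈ Icc 1 k, G j) := by
    rw [← sum_Ico_ite_rootCos_le hkn hper hG]
    refine sum_congr rfl fun l hl ↦ ?_
    rw [witness_of_window (mem_Ico.1 hl).1 (mem_Ico.1 hl).2.le, ite_mul, one_mul, zero_mul]
  have right : ∑ l ∈ Ico ((D - a) * n) (D * n), witness n k D a l * G l =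
      (D - (D - a) : ℕ) * (G 0 + 2 * ∑ j ∈ Icc 1 (k - 1), G j) := by
    rw [← sum_Ico_ite_rootCos_lt hk hkn hper hG]
    refine sum_congr rfl fun l hl ↦ ?_
    rw [witness_of_not_window hk1 (.inr (mem_Ico.1 hl).1), ite_mul, one_mul, zero_mul]
  rw [range_eq_Ico, ← sum_Ico_consecutive _ (Nat.zero_le ((D - a) * n)) (by gcongr; omega),
    ← sum_Ico_consecutive _ (Nat.zero_le (a * n)) (by gcongr; omega), left, window, right,
    Nat.sub_sub_self (by omega), Nat.sub_zero, Nat.sub_sub, ← two_mul, Nat.cast_sub haD]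
  push_cast
  ring

lemma sum_witness_mul_sseqTerm_neg (hn : 5 ≤ n) (haD : 2 * a ≤ D)
    (hneg : D * overshoot n < 2 * a) :
    ∑ l ∈ range (D * n), witness n (kc n) D a l * sseqTerm n l < 0 := by
  have hpos := sseqTerm_kc_pos hn
  have scaled : sseq n (kc n) = overshoot n * sseqTerm n (kc n) :=
    (div_mul_cancel₀ _ hpos.ne').symm
  have previous : sseq n (kc n - 1) = (overshoot n - 1) * sseqTerm n (kc n) := by
    linarith [sseq_kc (n := n) (by omega)]
  calc ∑ l ∈ range (D * n), witness n (kc n) D a l * sseqTerm n l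
      = 2 * (D * overshoot n - 2 * a) * sseqTerm n (kc n) := by
        rw [sum_witness_mul (kc_mem (by omega)).1 (two_mul_kc_lt (by omega)) haD
          (sseqTerm_periodic n) fun j ↦ sseqTerm_sub, sseqTerm_zero, ← sseq_eq_sum,
          ← sseq_eq_sum, previous, scaled]
        ring
    _ < 0 := mul_neg_of_neg_of_pos (by linarith) hpos

lemma sum_witness (hk : 0 < k) (hkn : 2 * k < n) (haD : 2 * a ≤ D) (hD : 0 < D) :
    ∑ l ∈ Icc 1 (D * n - 1), witness n k D a l = D * (2 * k + 1) - 4 * a - 1 := by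
  have total := sum_witness_mul (G := fun _ ↦ 1) hk hkn haD (fun _ ↦ rfl) fun _ _ ↦ rfl
  rw [sum_range_eq_add_sum_Icc _ (Nat.mul_pos hD (by omega)),
    witness_zero (rootCos_zero n ▸ rootCos_lt_rootCos hk (by omega))] at total
  simp only [mul_one, sum_const, Nat.card_Icc, Nat.add_sub_cancel, nsmul_eq_mul,
    Nat.cast_sub hk, Nat.cast_one] at total
  linarith

lemma exists_witness_eq_zero_not_dvd (hn : 5 ≤ n) (ha : 1 ≤ a) (haD : 2 * a ≤ D) {N K : ℕ}
    (hK : ¬N ∣ K) : ∃ l < D * n, witness n (kc n) D a l = 0 ∧ ¬N ∣ K * l := by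
  have hkc := two_mul_kc_lt (n := n) (by omega)
  have hna : n ≤ a * n := Nat.le_mul_of_pos_left n ha
  have haD' : a * n ≤ D * n := by gcongr; omega
  have zero_at {l : ℕ} (hl : kc n ≤ l) (hl' : l ≤ kc n + 1) :
      witness n (kc n) D a l = 0 :=
    witness_eq_zero_of_lt (rootCos_le_rootCos hl (by omega)) (by omega)
  by_cases h : N ∣ K * kc n
  · refine ⟨kc n + 1, by omega, zero_at (by omega) le_rfl, fun h' ↦ hK ?_⟩
    rwa [mul_add_one, Nat.dvd_add_right h] at h'
  · exact ⟨kc n, by omega, zero_at le_rfl (by omega), h⟩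

lemma sum_witness_mul_rootCos_neg (hn : 5 ≤ n) (ha : 1 ≤ a) (haD : 2 * a ≤ D)
    (hneg : D * overshoot n < 2 * a) {K : ℕ} (hK : 0 < K) (hKN : K < D * n) :
    ∑ l ∈ range (D * n),
      witness n (kc n) D a l * rootCos (D * n) (D * l) * (-1 + rootCos (D * n) (K * l)) < 0 := by
  have hD : D ≠ 0 := by omega
  have hDN : D < D * n := lt_mul_of_one_lt_right (by omega) (by omega)
  by_cases hself : K = D ∨ K = D * n - D
  · have cos_eq (l : ℕ) : rootCos (D * n) (K * l) = rootCos n l := by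
      rcases hself with rfl | rfl
      · exact rootCos_mul_mul hD n l
      · rw [Nat.sub_mul, mul_comm (D * n) l,
          rootCos_mul_sub (by rw [mul_comm l]; gcongr), rootCos_mul_mul hD]
    simpa only [cos_eq, rootCos_mul_mul hD, mul_assoc, sseqTerm] using
      sum_witness_mul_sseqTerm_neg hn haD hneg
  · obtain ⟨hKD, hKND⟩ := not_or.1 hself
    obtain ⟨l₀, hl₀, hzero, hndvd⟩ :=
      exists_witness_eq_zero_not_dvd hn ha haD (Nat.not_dvd_of_pos_of_lt hK hKN)
    refine sum_mul_rootCos_mul_neg (fun l ↦ ?_) hl₀ hzero hndvd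
      (Nat.not_dvd_of_pos_of_lt (by omega) hDN) ?_ fun h ↦ hKD (h.eq_of_lt_of_lt hDN hKN).symm
    · rw [rootCos_mul_mul hD]
      exact (witness_eq_one_or_rootCos_le ..).imp_right
        fun h ↦ ⟨h.1, h.2.trans_lt (rootCos_kc_neg hn)⟩
    · intro h
      have := Nat.eq_of_dvd_of_lt_two_mul (by omega) h (by omega)
      omega

lemma feasible_witness (hn : 5 ≤ n) (ha : 1 ≤ a) (haD : 2 * a ≤ D)
    (hneg : D * overshoot n < 2 * a) : feasible (D * n) D (witness n (kc n) D a) := by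
  refine ⟨fun l _ ↦ witness_eq_zero_or_one .., fun l hl ↦ ?_, fun K hK ↦ ?_⟩
  · rw [witness_sub (by omega) (by rw [mem_Icc] at hl; omega)]
  · rw [mem_Icc] at hK
    rw [feasible_sum_eq]
    exact sum_witness_mul_rootCos_neg hn ha haD hneg (by omega) (by omega)

lemma eventually_exists_feasible (hn : 5 ≤ n) : ∀ᶠ D : ℕ in atTop, ∃ x : ℕ → ℝ,
    feasible (D * n) D x ∧ (-5 + alpha n * D) / (-1 + n * D) ≤ connectivity (D * n) x := by
  have hlt : 0 < 1 - overshoot n := sub_pos.2 (overshoot_lt_one hn)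
  filter_upwards [eventually_gt_atTop 0,
    (tendsto_natCast_atTop_atTop.const_mul_atTop hlt).eventually_ge_atTop 2] with D hD hD2
  obtain ⟨a, ha, hneg, hle⟩ : ∃ a : ℕ, 1 ≤ a ∧ D * overshoot n < 2 * a ∧
      2 * a ≤ D * overshoot n + 2 := by
    refine ⟨⌊D * overshoot n / 2⌋₊ + 1, by omega, ?_, ?_⟩
    · push_cast
      linarith [Nat.lt_floor_add_one (D * overshoot n / 2)]
    · have := overshoot_nonneg hn
      push_cast
      linarith [Nat.floor_le (by positivity : 0 ≤ D * overshoot n / 2)]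
  have haD : 2 * a ≤ D := by
    have : (2 * a : ℝ) ≤ D := by linarith
    exact_mod_cast this
  have hDn : (1 : ℝ) < D * n := mod_cast (by nlinarith : 1 < D * n)
  refine ⟨witness n (kc n) D a, feasible_witness hn ha haD hneg, ?_⟩
  rw [connectivity, sum_witness (kc_mem (by omega)).1 (two_mul_kc_lt (by omega)) haD hD,
    Nat.cast_mul, neg_add_eq_sub 1, mul_comm (n : ℝ)]
  gcongr
  rw [alpha_eq hn]
  linarith

lemma alpha_div_le_of_connectivity_le {b : ℝ} (hn : 5 ≤ n)
    (hb : ∀ D x, 0 < D → feasible (D * n) D x → connectivity (D * n) x ≤ b) :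
    alpha n / n ≤ b := by
  have hn0 : (n : ℝ) ≠ 0 := mod_cast (by omega : n ≠ 0)
  refine le_of_tendsto (tendsto_add_mul_div_add_mul_atTop_nhds (-5) (-1) (alpha n) hn0) ?_
  filter_upwards [eventually_exists_feasible hn, eventually_gt_atTop 0] with D ⟨x, hx, hle⟩ hD
  exact hle.trans (hb D x hD hx)

end LowerBound

/-- The supremum of the connectivities of feasible vectors, over all `N ≥ 2` and
`1 ≤ p ≤ ⌊N/2⌋`, equals the supremum of `{α_Ñ/Ñ : Ñ ≥ 5}`. -/
theorem sup_connectivity_eq_sup_alpha :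
    sSup {μ : ℝ | ∃ (N p : ℕ) (x : ℕ → ℝ), 2 ≤ N ∧ 1 ≤ p ∧ p ≤ N / 2 ∧ feasible N p x ∧
        μ = (∑ l ∈ Finset.Icc 1 (N - 1), x l) / ((N : ℝ) - 1)}
      = sSup {v : ℝ | ∃ Nt : ℕ, 5 ≤ Nt ∧ v = alpha Nt / (Nt : ℝ)} := by
  have admissible {n D : ℕ} (hn : 5 ≤ n) (hD : 0 < D) : 2 ≤ D * n ∧ 1 ≤ D ∧ D ≤ D * n / 2 :=
    ⟨by nlinarith, hD, (Nat.le_div_iff_mul_le two_pos).2 (by gcongr; omega)⟩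
  refine IsLUB.csSup_eq ⟨?upper, fun b hb ↦ csSup_le ⟨_, 5, le_rfl, rfl⟩ ?least⟩ ?nonempty
  case upper =>
    rintro _ ⟨N, p, x, -, hp, hpN, hx, rfl⟩
    obtain ⟨n, hn, hle⟩ := exists_connectivity_le_alpha_div hp (by omega) hx
    exact hle.trans (le_csSup bddAbove_alpha_div ⟨n, hn, rfl⟩)
  case least =>
    rintro _ ⟨n, hn, rfl⟩
    refine alpha_div_le_of_connectivity_le hn fun D x hD hx ↦ hb ?_
    obtain ⟨hN, hp, hpN⟩ := admissible hn hD
    exact ⟨D * n, D, x, hN, hp, hpN, hx, rfl⟩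
  case nonempty =>
    obtain ⟨D, ⟨x, hx, -⟩, hD⟩ :=
      ((eventually_exists_feasible le_rfl).and (Filter.eventually_gt_atTop 0)).exists
    obtain ⟨hN, hp, hpN⟩ := admissible le_rfl hD
    exact ⟨_, D * 5, D, x, hN, hp, hpN, hx, rfl⟩
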